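/- Let n ≥ 1 be an integer and let a, b > 0 be real numbers. Let (Λ_k)_{k≥1} be a nondecreasing sequence of positive real numbers such that for every integer m ≥ 1 one has ∑_{k=1}^m Λ_k ≥ a·m^{(n+2)/n} + b·m. Define the doubled sequence (λ_j)_{j≥1} by λ_{2k−1} = λ_{2k} = Λ_k for every k ≥ 1. Then for every integer m ≥ 1, ∑_{j=1}^m λ_j ≥ 2^{−2/n}·a·m^{(n+2)/n} + b·m. -/

import Mathlib

/-! Repeating each term of `Λ` `r` times splits a partial sum of length `m` into `r` partial sums
of `Λ`, of lengths `⌊(m + i) / r⌋` for `i < r`, which add up to `m`. If the partial sums of `Λ`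
dominate a convex function `g`, Jensen's inequality therefore bounds the total below by
`r * g (m / r)`. Here `r = 2` and `g x = a * x ^ ((n + 2) / n) + b * x`. -/

open Finset

theorem sum_range_comp_div {M : Type*} [AddCommMonoid M] (f : ℕ → M) {r : ℕ} (hr : r ≠ 0)
    (m : ℕ) :
    ∑ j ∈ range m, f (j / r) = ∑ i ∈ range r, ∑ k ∈ range ((m + i) / r), f k := by
  obtain ⟨s, rfl⟩ := Nat.exists_eq_succ_of_ne_zero hr
  induction m with
  | zero =>
    refine (sum_eq_zero fun i hi ↦ ?_).symm
    rw [zero_add, Nat.div_eq_of_lt (mem_range.1 hi), sum_range_zero]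
  | succ m ih =>
    -- Passing from `m` to `m + 1` shifts the lengths by one index: the one at `i = 0` is dropped
    -- and its successor is appended.
    have last_length : (m + 1 + s) / (s + 1) = m / (s + 1) + 1 := by
      rw [add_right_comm, add_assoc, Nat.add_div_right m s.succ_pos]
    rw [sum_range_succ, ih, sum_range_succ', sum_range_succ _ s, last_length, sum_range_succ,
      add_zero, add_assoc]
    simp only [add_assoc, add_comm 1]

theorem sum_range_add_div {r : ℕ} (hr : r ≠ 0) (m : ℕ) : ∑ i ∈ range r, (m + i) / r = m := by
  simpa only [sum_const, card_range, smul_eq_mul, mul_one] using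
    (sum_range_comp_div (fun _ ↦ (1 : ℕ)) hr m).symm

theorem nsmul_map_div_le_sum_range_comp_div {𝕜 β : Type*} [Field 𝕜] [LinearOrder 𝕜]
    [IsStrictOrderedRing 𝕜] [AddCommGroup β] [PartialOrder β] [IsOrderedAddMonoid β] [Module 𝕜 β]
    [IsStrictOrderedModule 𝕜 β] {g : 𝕜 → β} (hg : ConvexOn 𝕜 (Set.Ici 0) g) {f : ℕ → β}
    (hf : ∀ k : ℕ, g k ≤ ∑ i ∈ range k, f i) {r : ℕ} (hr : r ≠ 0) (m : ℕ) :
    r • g (m / r) ≤ ∑ j ∈ range m, f (j / r) := by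
  have hr' : (r : 𝕜) ≠ 0 := Nat.cast_ne_zero.2 hr
  have mean_length : ∑ i ∈ range r, (r : 𝕜)⁻¹ • (((m + i) / r : ℕ) : 𝕜) = m / r := by
    rw [← smul_sum, ← Nat.cast_sum, sum_range_add_div hr, smul_eq_mul, inv_mul_eq_div]
  have jensen : g (m / r) ≤ ∑ i ∈ range r, (r : 𝕜)⁻¹ • g ((m + i) / r : ℕ) :=
    mean_length ▸ hg.map_sum_le (fun _ _ ↦ by positivity)
      (by rw [sum_const, card_range, nsmul_eq_mul, mul_inv_cancel₀ hr'])
      (fun _ _ ↦ Set.mem_Ici.2 (Nat.cast_nonneg _))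
  calc
    r • g (m / r) ≤ r • ∑ i ∈ range r, (r : 𝕜)⁻¹ • g ((m + i) / r : ℕ) :=
      nsmul_le_nsmul_right jensen r
    _ = ∑ i ∈ range r, g ((m + i) / r : ℕ) := by
      rw [← smul_sum, ← Nat.cast_smul_eq_nsmul 𝕜, smul_inv_smul₀ hr']
    _ ≤ ∑ i ∈ range r, ∑ k ∈ range ((m + i) / r), f k := sum_le_sum fun _ _ ↦ hf _
    _ = ∑ j ∈ range m, f (j / r) := (sum_range_comp_div f hr m).symm

theorem convexOn_mul_rpow_add_mul {a p : ℝ} (ha : 0 ≤ a) (hp : 1 ≤ p) (b : ℝ) :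
    ConvexOn ℝ (Set.Ici 0) fun x : ℝ ↦ a * x ^ p + b * x :=
  ((convexOn_rpow hp).smul ha).add ((LinearMap.mulLeft ℝ b).convexOn (convex_Ici 0))

theorem mul_div_rpow_eq {r x : ℝ} (hr : 0 < r) (hx : 0 ≤ x) (p : ℝ) :
    r * (x / r) ^ p = r ^ (1 - p) * x ^ p := by
  rw [Real.div_rpow hx hr.le, Real.rpow_sub hr, Real.rpow_one, mul_div_assoc', div_mul_eq_mul_div]

theorem eq_comp_div_two {α : Type*} {f g : ℕ → α}
    (h : ∀ k, g (2 * k) = f k ∧ g (2 * k + 1) = f k) : g = fun j ↦ f (j / 2) := by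
  ext j
  obtain ⟨k, rfl | rfl⟩ := j.even_or_odd'
  · rw [(h k).1, Nat.mul_div_cancel_left k two_pos]
  · rw [(h k).2, Nat.mul_add_div two_pos, Nat.div_eq_of_lt one_lt_two, add_zero]

theorem stmt_0_general {d a : ℝ} (hd : 0 < d) (ha : 0 ≤ a) (b : ℝ) {Λ : ℕ → ℝ}
    (hΛ : ∀ m : ℕ, 1 ≤ m → a * (m : ℝ) ^ ((d + 2) / d) + b * m ≤ ∑ k ∈ range m, Λ k)
    {r : ℕ} (hr : r ≠ 0) (m : ℕ) :
    (r : ℝ) ^ (-2 / d) * a * (m : ℝ) ^ ((d + 2) / d) + b * m ≤ ∑ j ∈ range m, Λ (j / r) := by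
  have hr' : (0 : ℝ) < r := Nat.cast_pos.2 (Nat.pos_of_ne_zero hr)
  have hp : 1 ≤ (d + 2) / d := (one_le_div hd).2 (by linarith)
  have exponent_eq : -2 / d = 1 - (d + 2) / d := by field_simp; ring
  have hΛ₀ (k : ℕ) : a * (k : ℝ) ^ ((d + 2) / d) + b * k ≤ ∑ i ∈ range k, Λ i := by
    obtain rfl | hk := k.eq_zero_or_pos
    · simp [Real.zero_rpow (zero_lt_one.trans_le hp).ne']
    · exact hΛ k hk
  calc
    (r : ℝ) ^ (-2 / d) * a * (m : ℝ) ^ ((d + 2) / d) + b * m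
        = a * (r * (m / r : ℝ) ^ ((d + 2) / d)) + b * (r * (m / r)) := by
      rw [mul_div_rpow_eq hr' m.cast_nonneg, mul_div_cancel₀ _ hr'.ne', exponent_eq]
      ring
    _ = r • (a * (m / r : ℝ) ^ ((d + 2) / d) + b * (m / r)) := by rw [nsmul_eq_mul]; ring
    _ ≤ ∑ j ∈ range m, Λ (j / r) :=
      nsmul_map_div_le_sum_range_comp_div (convexOn_mul_rpow_add_mul ha hp b) hΛ₀ hr m

/-- If the partial sums of a nondecreasing positive sequence `Λ`
(0-indexed, so `Λ k` is the `(k+1)`-st term) satisfy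
`∑_{k=1}^m Λ_k ≥ a·m^{(n+2)/n} + b·m`, then the doubled sequence `lam`
(with `lam (2k) = lam (2k+1) = Λ k`, i.e. `λ_{2k-1} = λ_{2k} = Λ_k` in 1-indexed
notation) satisfies `∑_{j=1}^m λ_j ≥ 2^{-2/n}·a·m^{(n+2)/n} + b·m`. -/
theorem stmt_0 (n : ℕ) (hn : 1 ≤ n) (a b : ℝ) (ha : 0 < a) (hb : 0 < b)
    (Λ : ℕ → ℝ) (hΛpos : ∀ k, 0 < Λ k) (hΛmono : Monotone Λ)
    (hΛsum : ∀ m : ℕ, 1 ≤ m →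
      (∑ k ∈ Finset.range m, Λ k) ≥
        a * (m : ℝ) ^ (((n : ℝ) + 2) / n) + b * m)
    (lam : ℕ → ℝ)
    (hlam : ∀ k : ℕ, lam (2 * k) = Λ k ∧ lam (2 * k + 1) = Λ k) :
    ∀ m : ℕ, 1 ≤ m →
      (∑ j ∈ Finset.range m, lam j) ≥
        (2 : ℝ) ^ (-(2 : ℝ) / n) * a * (m : ℝ) ^ (((n : ℝ) + 2) / n) + b * m := by
  obtain rfl := eq_comp_div_two hlam
  exact fun m _ ↦ stmt_0_general (Nat.cast_pos.2 hn) ha.le b hΛsum two_ne_zero m
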